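/- (A modulus 4k identity.) Let q be a complex number with 0 < |q| < 1, and let k ≥ 2 and 1 ≤ i ≤ k be integers. Then ∑_{s_1 ≥ s_2 ≥ ⋯ ≥ s_k ≥ 0} (-q;q)_{2 s_2} · q^{s_1^2 + 2(s_3^2 + ⋯ + s_k^2) + s_1 - s_2 + 2(s_{i+1} + ⋯ + s_k)} / [(q^2;q^2)_{s_1-s_2} (q^2;q^2)_{s_2-s_3} ⋯ (q^2;q^2)_{s_{k-1}-s_k} (q^2;q^2)_{s_k}] = (q^{4k}, q^{2i-1}, q^{4k-2i+1}; q^{4k})_∞ / (q;q)_∞, where the term 2(s_{i+1} + ⋯ + s_k) is empty (equal to 0) when i = k. -/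

import Mathlib

/-- The finite q-Pochhammer symbol `(x;q)_n = ∏_{j=0}^{n-1} (1 - x q^j)`. -/
noncomputable def qPoch (x q : ℂ) (n : ℕ) : ℂ := ∏ j ∈ Finset.range n, (1 - x * q ^ j)

/-- The infinite q-Pochhammer symbol `(x;q)_∞ = ∏_{j=0}^{∞} (1 - x q^j)`. -/
noncomputable def qPochInf (x q : ℂ) : ℂ := ∏' j : ℕ, (1 - x * q ^ j)

/-!
Write `Q = q ^ 2`. Fixing `s_2`, the sum over `s_1 ≤ N` is evaluated by the `q`-binomial theorem,
and the result is the sum of Bailey's lemma relative to `a = Q ^ e` with parameter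
`y = -q ^ (2 * e + 1)`: here `e = 1` if `i = 1`, because then the exponent contains `2 * s_2`, and
`e = 0` otherwise. The sequence `β` it is applied to is the remaining sum over `s_3, …, s_k`.

This `β` is reached by a Bailey chain in the base `Q`. One starts from the unit pair relative to
`a = Q`, and every step contributes `Q ^ (s_m ^ 2 + s_m)`. For `i ≥ 2`, once the variables carrying
a linear term are used up, the pair is folded into one relative to `a = 1`, and every further step
contributes `Q ^ (s_m ^ 2)`. Each step multiplies `α_r` by `Q ^ (r ^ 2 + r)` or `Q ^ (r ^ 2)`, and
Bailey's lemma at the end multiplies it by `q ^ (r ^ 2)` if `e = 0`, and by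
`q ^ (r ^ 2 + 2 * r) * (1 + q) / (1 + q ^ (2 * r + 1))` if `e = 1`, where the denominator cancels a
factor of `1 - Q ^ (2 * r + 1)`. So `α` stays the sequence of terms of a theta series, which the
Jacobi triple product sums as `N → ∞`.
-/

section

open Finset

lemma qPoch_zero (x q : ℂ) : qPoch x q 0 = 1 := prod_range_zero _

lemma qPoch_succ (x q : ℂ) (n : ℕ) : qPoch x q (n + 1) = qPoch x q n * (1 - x * q ^ n) :=
  prod_range_succ _ _

lemma qPoch_add (x q : ℂ) (m n : ℕ) :
    qPoch x q (m + n) = qPoch x q m * qPoch (x * q ^ m) q n := by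
  simp only [qPoch, prod_range_add, pow_add, mul_assoc]

lemma qPoch_succ_left (x q : ℂ) (n : ℕ) : qPoch x q (n + 1) = (1 - x) * qPoch (x * q) q n := by
  rw [add_comm, qPoch_add, pow_one, qPoch, prod_range_one, pow_zero, mul_one]

lemma qPoch_self_succ (q : ℂ) (n : ℕ) : qPoch q q (n + 1) = qPoch q q n * (1 - q ^ (n + 1)) := by
  rw [qPoch_succ, pow_succ']

lemma qPoch_zero_left (q : ℂ) (n : ℕ) : qPoch 0 q n = 1 := by simp [qPoch]

lemma one_sub_pow_succ_ne_zero {q : ℂ} (hq : ∀ n, qPoch q q n ≠ 0) (n : ℕ) :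
    1 - q ^ (n + 1) ≠ 0 :=
  right_ne_zero_of_mul (qPoch_self_succ q n ▸ hq (n + 1))

/-- The weight `∏_{j < n} q ^ j (w q ^ j - y) = w ^ n q ^ (n (n - 1)) (y / w; q)_n`, written so that
it makes sense for `w = 0` and for `y = 0`.  With `w = a q` it is the factor by which one step of
the Bailey chain relative to `a` multiplies the sequence `β`. -/
noncomputable def baileyWeight (q w y : ℂ) (n : ℕ) : ℂ :=
  ∏ j ∈ range n, q ^ j * (w * q ^ j - y)

lemma baileyWeight_zero (q w y : ℂ) : baileyWeight q w y 0 = 1 := prod_range_zero _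

lemma baileyWeight_succ (q w y : ℂ) (n : ℕ) :
    baileyWeight q w y (n + 1) = baileyWeight q w y n * (q ^ n * (w * q ^ n - y)) :=
  prod_range_succ _ _

lemma baileyWeight_add (q w y : ℂ) (m n : ℕ) :
    baileyWeight q w y (m + n) =
      baileyWeight q w y m * baileyWeight q (w * q ^ (2 * m)) (y * q ^ m) n := by
  rw [baileyWeight, prod_range_add]
  congr 1
  exact prod_congr rfl fun j _ ↦ by ring

lemma baileyWeight_mul_mul (q w y : ℂ) (n : ℕ) :
    baileyWeight q (w * q) (y * q) n = q ^ n * baileyWeight q w y n := by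
  rw [baileyWeight, baileyWeight, ← card_range n, ← prod_const, card_range, ← prod_mul_distrib]
  exact prod_congr rfl fun j _ ↦ by ring

lemma baileyWeight_zero_right (q : ℂ) (s n : ℕ) :
    baileyWeight q (q ^ (s + 1)) 0 n = q ^ (n ^ 2 + s * n) := by
  induction n with
  | zero => simp [baileyWeight_zero]
  | succ n ih => rw [baileyWeight_succ, ih]; ring

/-- The general term `(-u) ^ r p ^ (r (r - 1) / 2)` of a theta series. -/
noncomputable def thetaTerm (p u : ℂ) (r : ℕ) : ℂ := (-u) ^ r * p ^ r.choose 2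

lemma thetaTerm_zero (p u : ℂ) : thetaTerm p u 0 = 1 := by simp [thetaTerm]

lemma thetaTerm_succ (p u : ℂ) (r : ℕ) :
    thetaTerm p u (r + 1) = thetaTerm p u r * -(u * p ^ r) := by
  rw [thetaTerm, thetaTerm, Nat.choose_succ_succ' r 1, Nat.choose_one_right]
  ring

lemma thetaTerm_eq_prod (p u : ℂ) (r : ℕ) : thetaTerm p u r = ∏ j ∈ range r, -(u * p ^ j) := by
  induction r with
  | zero => exact thetaTerm_zero p u
  | succ r ih => rw [thetaTerm_succ, ih, prod_range_succ]

lemma baileyWeight_zero_left (q y : ℂ) (n : ℕ) : baileyWeight q 0 y n = thetaTerm q y n := by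
  rw [thetaTerm_eq_prod]
  exact prod_congr rfl fun j _ ↦ by ring

lemma thetaTerm_add (p u : ℂ) (m n : ℕ) :
    thetaTerm p u (m + n) = thetaTerm p u m * thetaTerm p (u * p ^ m) n := by
  simp only [thetaTerm_eq_prod, prod_range_add, pow_add, mul_assoc]

lemma thetaTerm_mul_pow (p u z x : ℂ) (r : ℕ) :
    thetaTerm p u r * (z ^ r ^ 2 * x ^ r) = thetaTerm (p * z ^ 2) (u * z * x) r := by
  induction r with
  | zero => simp [thetaTerm_zero]
  | succ r ih => rw [thetaTerm_succ, thetaTerm_succ, ← ih]; ring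

lemma thetaTerm_mul_right_succ (u v : ℂ) (r : ℕ) :
    thetaTerm (u * v) v (r + 1) = -(v ^ (2 * r + 1) * thetaTerm (u * v) u r) := by
  rw [thetaTerm, thetaTerm, Nat.choose_succ_succ' r 1, Nat.choose_one_right]
  ring

section qNotRootOfUnity

variable {q : ℂ} (hq : ∀ n, qPoch q q n ≠ 0)
include hq

lemma sum_q_pascal_succ (M : ℕ) (c : ℕ → ℂ) :
    (1 - q ^ (M + 1)) * ∑ m ∈ range (M + 2), c m / (qPoch q q m * qPoch q q (M + 1 - m)) =
      ∑ m ∈ range (M + 1), (q ^ m * c m + c (m + 1)) / (qPoch q q m * qPoch q q (M - m)) := by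
  have split_factor : ∀ m ∈ range (M + 2),
      (1 - q ^ (M + 1)) * (c m / (qPoch q q m * qPoch q q (M + 1 - m))) =
        q ^ m * (1 - q ^ (M + 1 - m)) * c m / (qPoch q q m * qPoch q q (M + 1 - m)) +
          (1 - q ^ m) * c m / (qPoch q q m * qPoch q q (M + 1 - m)) := fun m hm ↦ by
    rw [← pow_mul_pow_sub q (mem_range_succ_iff.mp hm)]
    ring
  rw [mul_sum, sum_congr rfl split_factor, sum_add_distrib, sum_range_succ,
    sum_range_succ' (fun m ↦ (1 - q ^ m) * c m / _)]
  simp only [Nat.sub_self, pow_zero, sub_self, mul_zero, zero_mul, zero_div, add_zero]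
  rw [← sum_add_distrib]
  refine sum_congr rfl fun m hm ↦ ?_
  obtain ⟨d, rfl⟩ := Nat.exists_eq_add_of_le (mem_range_succ_iff.mp hm)
  rw [show m + d + 1 - m = d + 1 by omega, Nat.add_sub_add_right, Nat.add_sub_cancel_left,
    qPoch_self_succ, qPoch_self_succ]
  have := hq m
  have := hq d
  have := one_sub_pow_succ_ne_zero hq m
  have := one_sub_pow_succ_ne_zero hq d
  field_simp

theorem q_chu_vandermonde (w y : ℂ) (M : ℕ) :
    ∑ m ∈ range (M + 1), baileyWeight q w y m * qPoch (w * q ^ m) q (M - m) /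
      (qPoch q q m * qPoch q q (M - m)) = qPoch y q M / qPoch q q M := by
  induction M generalizing w y with
  | zero => simp [qPoch_zero, baileyWeight_zero]
  | succ M ih =>
    apply mul_left_cancel₀ (one_sub_pow_succ_ne_zero hq M)
    have pascal : ∀ m ∈ range (M + 1),
        q ^ m * (baileyWeight q w y m * qPoch (w * q ^ m) q (M + 1 - m)) +
            baileyWeight q w y (m + 1) * qPoch (w * q ^ (m + 1)) q (M + 1 - (m + 1)) =
          (1 - y) * (baileyWeight q (w * q) (y * q) m * qPoch (w * q * q ^ m) q (M - m)) := by
      intro m hm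
      rw [Nat.succ_sub (mem_range_succ_iff.mp hm), Nat.succ_eq_add_one, qPoch_succ_left,
        Nat.add_sub_add_right, baileyWeight_succ, baileyWeight_mul_mul,
        show w * q ^ m * q = w * q ^ (m + 1) by ring, show w * q * q ^ m = w * q ^ (m + 1) by ring]
      ring
    rw [sum_q_pascal_succ hq M fun m ↦ baileyWeight q w y m * qPoch (w * q ^ m) q (M + 1 - m),
      sum_congr rfl fun m hm ↦ by rw [pascal m hm, mul_div_assoc], ← mul_sum, ih,
      qPoch_self_succ, qPoch_succ_left]
    have := hq M
    have := one_sub_pow_succ_ne_zero hq M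
    field_simp

theorem q_binomial_theorem (y : ℂ) (M : ℕ) :
    ∑ m ∈ range (M + 1), thetaTerm q y m / (qPoch q q m * qPoch q q (M - m)) =
      qPoch y q M / qPoch q q M := by
  simpa only [baileyWeight_zero_left, zero_mul, qPoch_zero_left, mul_one]
    using q_chu_vandermonde hq 0 y M

lemma sum_baileyWeight_div (y : ℂ) (s M : ℕ) :
    ∑ m ∈ range (M + 1), baileyWeight q (q ^ (s + 1)) y m /
        (qPoch q q m * qPoch q q (M - m) * qPoch q q (m + s)) =
      qPoch y q M / (qPoch q q M * qPoch q q (M + s)) := by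
  rw [← div_div, ← q_chu_vandermonde hq (q ^ (s + 1)) y M, sum_div]
  refine sum_congr rfl fun m hm ↦ ?_
  have tail : qPoch q q (M + s) = qPoch q q (m + s) * qPoch (q ^ (s + 1) * q ^ m) q (M - m) := by
    rw [show M + s = m + s + (M - m) by have := mem_range_succ_iff.mp hm; omega, qPoch_add]
    ring_nf
  have := hq (m + s)
  have : qPoch (q ^ (s + 1) * q ^ m) q (M - m) ≠ 0 := right_ne_zero_of_mul (tail ▸ hq (M + s))
  rw [tail]
  field_simp

end qNotRootOfUnity

/-- `(α, β)` is a Bailey pair relative to `a = q ^ s`, in the normalisation where the denominator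
`(a q; q)_{n + r}` is replaced by `(q; q)_{n + r + s}`, which only scales `β`. -/
def IsBaileyPair (q : ℂ) (s : ℕ) (α β : ℕ → ℂ) : Prop :=
  ∀ n, β n = ∑ r ∈ range (n + 1), α r / (qPoch q q (n - r) * qPoch q q (n + r + s))

lemma sum_range_succ_sum_range_succ {M : Type*} [AddCommMonoid M] (N : ℕ) (f : ℕ → ℕ → M) :
    ∑ n ∈ range (N + 1), ∑ r ∈ range (n + 1), f n r =
      ∑ r ∈ range (N + 1), ∑ m ∈ range (N - r + 1), f (r + m) r := by
  have h := sum_range_diag_flip (N + 1) fun r m ↦ f (r + m) r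
  calc ∑ n ∈ range (N + 1), ∑ r ∈ range (n + 1), f n r
      = ∑ n ∈ range (N + 1), ∑ r ∈ range (n + 1), f (r + (n - r)) r :=
        sum_congr rfl fun n _ ↦ sum_congr rfl fun r hr ↦ by
          rw [Nat.add_sub_cancel' (mem_range_succ_iff.mp hr)]
    _ = ∑ r ∈ range (N + 1), ∑ m ∈ range (N + 1 - r), f (r + m) r := h
    _ = _ := sum_congr rfl fun r hr ↦ by rw [Nat.sub_add_comm (mem_range_succ_iff.mp hr)]

section IsBaileyPair

variable {q : ℂ} (hq : ∀ n, qPoch q q n ≠ 0) {s : ℕ} {α β : ℕ → ℂ}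
include hq

theorem IsBaileyPair.bailey_lemma {y : ℂ} (hy : ∀ n, qPoch y q n ≠ 0)
    (h : IsBaileyPair q s α β) :
    IsBaileyPair q s (fun r ↦ baileyWeight q (q ^ (s + 1)) y r / qPoch y q r * α r)
      (fun n ↦ (∑ b ∈ range (n + 1), baileyWeight q (q ^ (s + 1)) y b / qPoch q q (n - b) * β b) /
        qPoch y q n) := by
  intro n
  simp only [h _, mul_sum]
  rw [sum_range_succ_sum_range_succ, sum_div]
  refine sum_congr rfl fun r hr ↦ ?_
  have hrn := mem_range_succ_iff.mp hr
  have inner := sum_baileyWeight_div hq (y * q ^ r) (2 * r + s) (n - r)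
  have split_y := qPoch_add y q r (n - r)
  rw [show n - r + (2 * r + s) = n + r + s by omega] at inner
  rw [Nat.add_sub_cancel' hrn] at split_y
  have tail_ne : qPoch (y * q ^ r) q (n - r) ≠ 0 := right_ne_zero_of_mul (split_y ▸ hy n)
  have factor : ∀ m ∈ range (n - r + 1),
      baileyWeight q (q ^ (s + 1)) y (r + m) / qPoch q q (n - (r + m)) *
          (α r / (qPoch q q (r + m - r) * qPoch q q (r + m + r + s))) =
        baileyWeight q (q ^ (s + 1)) y r * α r *
          (baileyWeight q (q ^ (2 * r + s + 1)) (y * q ^ r) m /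
            (qPoch q q m * qPoch q q (n - r - m) * qPoch q q (m + (2 * r + s)))) := by
    intro m _
    rw [baileyWeight_add, Nat.add_sub_cancel_left, ← Nat.sub_sub, ← pow_add,
      show r + m + r + s = m + (2 * r + s) by omega, show s + 1 + 2 * r = 2 * r + s + 1 by omega]
    simp only [div_eq_mul_inv, mul_inv]
    ring
  rw [sum_congr rfl factor, ← mul_sum, inner, split_y]
  have := hy r
  field_simp

theorem IsBaileyPair.step (h : IsBaileyPair q s α β) :
    IsBaileyPair q s (fun r ↦ q ^ (r ^ 2 + s * r) * α r)
      (fun n ↦ ∑ b ∈ range (n + 1), q ^ (b ^ 2 + s * b) / qPoch q q (n - b) * β b) := by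
  simpa only [baileyWeight_zero_right, qPoch_zero_left, div_one]
    using h.bailey_lemma hq (y := 0) fun n ↦ by simp [qPoch_zero_left]

theorem isBaileyPair_zero_iff_one {a : ℕ → ℂ} (h0 : α 0 = a 0)
    (hsucc : ∀ r, α (r + 1) = a (r + 1) - q ^ (2 * r + 1) * a r) :
    IsBaileyPair q 0 α β ↔ IsBaileyPair q 1 (fun r ↦ a r * (1 - q ^ (2 * r + 1))) β := by
  -- With `A` below, the two sums differ by a telescoping sum of differences `A r - A (r + 1)`.
  refine forall_congr' fun n ↦ Eq.congr_right ?_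
  set A : ℕ → ℂ := fun r ↦ a r / (qPoch q q (n - r) * qPoch q q (n + r)) with hA
  have interior : ∀ r ∈ range n,
      a r * (1 - q ^ (2 * r + 1)) / (qPoch q q (n - r) * qPoch q q (n + r + 1)) =
        A r - q ^ (2 * r + 1) * a r / (qPoch q q (n - (r + 1)) * qPoch q q (n + (r + 1))) := by
    intro r hr
    obtain ⟨d, rfl⟩ := Nat.exists_eq_add_of_lt (mem_range.mp hr)
    simp only [hA]
    rw [show r + d + 1 - r = d + 1 by omega, show r + d + 1 - (r + 1) = d by omega,
      ← add_assoc, qPoch_self_succ _ d, qPoch_self_succ _ (r + d + 1 + r)]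
    have := hq d
    have := hq (r + d + 1 + r)
    have := one_sub_pow_succ_ne_zero hq d
    have := one_sub_pow_succ_ne_zero hq (r + d + 1 + r)
    field_simp
    ring
  have top : a n * (1 - q ^ (2 * n + 1)) / (qPoch q q (n - n) * qPoch q q (n + n + 1)) = A n := by
    simp only [hA]
    rw [qPoch_self_succ, ← two_mul]
    have := hq (n - n)
    have := hq (2 * n)
    have := one_sub_pow_succ_ne_zero hq (2 * n)
    field_simp
  have shift : ∑ r ∈ range n, A r + A n = ∑ r ∈ range n, A (r + 1) + A 0 :=
    (sum_range_succ A n).symm.trans (sum_range_succ' A n)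
  rw [sum_range_succ', sum_range_succ, sum_congr rfl interior, sum_sub_distrib, top,
    sub_add_eq_add_sub, shift]
  simp only [add_zero, h0, hsucc, sub_div, sum_sub_distrib, hA]
  ring

end IsBaileyPair

/-- The terms of the bilateral theta series `∑ (-u) ^ r p ^ (r (r - 1) / 2)` with `u v = p`, with
the indices `r` and `-r` added up; these are the `α_r` of Bailey pairs relative to `a = 1`. -/
noncomputable def thetaFold (p u v : ℂ) : ℕ → ℂ
  | 0 => 1
  | r + 1 => thetaTerm p u (r + 1) + thetaTerm p v (r + 1)

lemma thetaFold_zero (p u v : ℂ) : thetaFold p u v 0 = 1 := rfl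

lemma pow_sq_mul_thetaFold (p u v z : ℂ) (r : ℕ) :
    z ^ r ^ 2 * thetaFold p u v r = thetaFold (p * z ^ 2) (u * z) (v * z) r := by
  cases r with
  | zero => simp [thetaFold]
  | succ r =>
    have h (x : ℂ) := thetaTerm_mul_pow p x z 1 (r + 1)
    simp only [one_pow, mul_one] at h
    rw [thetaFold, thetaFold, ← h, ← h]
    ring

lemma thetaFold_succ (u v : ℂ) (r : ℕ) :
    thetaFold (u * v) u v (r + 1) =
      thetaTerm (u * v) u (r + 1) - v ^ (2 * r + 1) * thetaTerm (u * v) u r := by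
  rw [thetaFold, thetaTerm_mul_right_succ, sub_eq_add_neg]

lemma pow_eq_mul_pow_mul_pow {M : Type*} [Monoid M] (p : M) {j n : ℕ} (hj : j < n) :
    p ^ n = p * (p ^ j * p ^ (n - 1 - j)) := by
  rw [← pow_add, ← pow_succ', show j + (n - 1 - j) + 1 = n by omega]

lemma thetaTerm_div_pow_mul {u v : ℂ} (huv : u * v ≠ 0) (r : ℕ) :
    thetaTerm (u * v) (u / (u * v) ^ r) r * thetaTerm (u * v) v r = 1 := by
  rw [thetaTerm_eq_prod, thetaTerm_eq_prod, ← prod_range_reflect (fun j ↦ -(v * (u * v) ^ j)),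
    ← prod_mul_distrib]
  refine prod_eq_one fun j hj ↦ ?_
  rw [pow_eq_mul_pow_mul_pow (u * v) (mem_range.mp hj)]
  field_simp
  exact div_self huv

lemma qPoch_div_pow {u v : ℂ} (huv : u * v ≠ 0) (n : ℕ) :
    qPoch (u / (u * v) ^ n) (u * v) n =
      thetaTerm (u * v) (u / (u * v) ^ n) n * qPoch v (u * v) n := by
  rw [thetaTerm_eq_prod, qPoch, qPoch, ← prod_range_reflect (fun j ↦ 1 - v * (u * v) ^ j),
    ← prod_mul_distrib]
  refine prod_congr rfl fun j hj ↦ ?_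
  have := (mul_ne_zero_iff.mp huv).1
  have := (mul_ne_zero_iff.mp huv).2
  rw [pow_eq_mul_pow_mul_pow (u * v) (mem_range.mp hj)]
  field_simp
  ring

/-- The finite form of the Jacobi triple product: this is the `q`-binomial theorem for
`(u / p ^ n; p)_{2n}`, centred at its middle term. -/
theorem isBaileyPair_thetaFold {u v : ℂ} (huv : u * v ≠ 0)
    (hp : ∀ n, qPoch (u * v) (u * v) n ≠ 0) :
    IsBaileyPair (u * v) 0 (thetaFold (u * v) u v)
      (fun n ↦ qPoch u (u * v) n * qPoch v (u * v) n / qPoch (u * v) (u * v) (2 * n)) := by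
  intro n
  set p := u * v
  set y := u / p ^ n
  set c := thetaTerm p y n
  have hyp : y * p ^ n = u := div_mul_cancel₀ u (pow_ne_zero n huv)
  have hc : c ≠ 0 := left_ne_zero_of_mul_eq_one (thetaTerm_div_pow_mul huv n)
  have above (r : ℕ) : thetaTerm p y (n + r) = c * thetaTerm p u r := by rw [thetaTerm_add, hyp]
  have below (r : ℕ) (hr : r ≤ n) : thetaTerm p y (n - r) = c * thetaTerm p v r := by
    have hyr : y * p ^ (n - r) = u / p ^ r := by
      rw [eq_div_iff (pow_ne_zero r huv), mul_assoc, pow_sub_mul_pow p hr, hyp]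
    have hsplit := thetaTerm_add p y (n - r) r
    rw [Nat.sub_add_cancel hr, hyr] at hsplit
    rw [show c = _ from hsplit, mul_assoc, thetaTerm_div_pow_mul huv, mul_one]
  have product : qPoch y p (2 * n) = c * (qPoch u p n * qPoch v p n) := by
    rw [two_mul, qPoch_add, hyp, qPoch_div_pow huv]
    ring
  have key := q_binomial_theorem hp y (2 * n)
  rw [product, show 2 * n + 1 = n + (n + 1) by omega, sum_range_add, ← sum_range_reflect,
    sum_range_succ', ← add_assoc, ← sum_add_distrib] at key
  apply mul_left_cancel₀ hc
  rw [← mul_div_assoc, ← key, sum_range_succ', mul_add, mul_sum]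
  congr 1
  · refine sum_congr rfl fun r hr ↦ ?_
    have hrn : r + 1 ≤ n := mem_range.mp hr
    rw [show n - 1 - r = n - (r + 1) by omega, above, below _ hrn, thetaFold,
      show 2 * n - (n - (r + 1)) = n + (r + 1) by omega,
      show 2 * n - (n + (r + 1)) = n - (r + 1) by omega]
    simp only [div_eq_mul_inv, mul_inv, add_zero]
    ring
  · simp only [thetaFold, add_zero, Nat.sub_zero, show 2 * n - n = n by omega, mul_one_div, c]

/-- The value at `n = t_0` of the sum over `n ≥ t_1 ≥ ⋯ ≥ t_j ≥ 0` of
`q ^ (t_1 ^ 2 + ⋯ + t_j ^ 2)` times `q ^ t_m` for each `m` with `j - m < J`, divided by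
`(q;q)_{t_0 - t_1} ⋯ (q;q)_{t_{j-1} - t_j} (q;q)_{t_j}`. -/
noncomputable def innerSum (q : ℂ) (J : ℕ) : ℕ → ℕ → ℂ
  | 0, n => 1 / qPoch q q n
  | j + 1, n => ∑ b ∈ range (n + 1),
      q ^ (b ^ 2 + if j < J then b else 0) / qPoch q q (n - b) * innerSum q J j b

section BaileyChain

variable {q : ℂ} (hq0 : q ≠ 0) (hq : ∀ n, qPoch q q n ≠ 0)
include hq

lemma isBaileyPair_thetaFold_iff (u : ℂ) (β : ℕ → ℂ) :
    IsBaileyPair q 0 (thetaFold (u * q) u q) β ↔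
      IsBaileyPair q 1 (fun r ↦ thetaTerm (u * q) u r * (1 - q ^ (2 * r + 1))) β :=
  isBaileyPair_zero_iff_one hq (thetaTerm_zero _ _).symm (thetaFold_succ u q)

include hq0

theorem isBaileyPair_unit :
    IsBaileyPair q 1 (fun r ↦ thetaTerm q 1 r * (1 - q ^ (2 * r + 1)))
      (fun n ↦ if n = 0 then 1 else 0) := by
  have h := (isBaileyPair_thetaFold_iff hq 1 _).mp
    (by simpa only [one_mul] using isBaileyPair_thetaFold (u := 1) (v := q) (by simpa) (by simpa))
  rw [one_mul] at h
  convert h using 2 with n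
  cases n with
  | zero => simp [qPoch_zero]
  | succ n => simp [qPoch_succ_left 1]

theorem isBaileyPair_innerSum_of_le {J j : ℕ} (hj : j ≤ J) :
    IsBaileyPair q 1
      (fun r ↦ thetaTerm (q ^ (2 * j + 3)) (q ^ (2 * j + 2)) r * (1 - q ^ (2 * r + 1)))
      (innerSum q J j) := by
  have advance (p u : ℂ) (r : ℕ) : q ^ (r ^ 2 + 1 * r) *
      (thetaTerm p u r * (1 - q ^ (2 * r + 1))) =
        thetaTerm (p * q ^ 2) (u * q * q) r * (1 - q ^ (2 * r + 1)) := by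
    rw [← thetaTerm_mul_pow, one_mul, pow_add]
    ring
  induction j with
  | zero =>
    convert (isBaileyPair_unit hq0 hq).step hq using 2 with r n
    · rw [advance]
      ring_nf
    · simp [innerSum]
  | succ j ih =>
    convert (ih (by omega)).step hq using 2 with r n
    · rw [advance]
      ring_nf
    · simp only [innerSum, if_pos (Nat.lt_of_succ_le hj), one_mul]

theorem isBaileyPair_innerSum_add (J l : ℕ) :
    IsBaileyPair q 0
      (thetaFold (q ^ (2 * J + 2 * l + 3)) (q ^ (2 * J + l + 2)) (q ^ (l + 1)))
      (innerSum q J (J + l)) := by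
  induction l with
  | zero =>
    convert (isBaileyPair_thetaFold_iff hq (q ^ (2 * J + 2)) _).mpr ?_ using 2
    · ring
    · exact (pow_one q)
    · simpa only [← pow_succ, add_zero] using isBaileyPair_innerSum_of_le hq0 hq le_rfl
  | succ l ih =>
    convert ih.step hq using 2 with r n
    · rw [zero_mul, add_zero, pow_sq_mul_thetaFold]
      ring_nf
    · rw [← add_assoc, innerSum]
      simp only [if_neg (Nat.not_lt.mpr (Nat.le_add_right J l)), zero_mul]

end BaileyChain

open Filter Topology

section Limits

variable {x q : ℂ}

lemma one_sub_mul_pow_ne_zero (hx : ‖x‖ < 1) (hq : ‖q‖ < 1) (n : ℕ) : 1 - x * q ^ n ≠ 0 := by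
  have hlt : ‖x * q ^ n‖ < 1 := by
    rw [norm_mul, norm_pow]
    exact mul_lt_one_of_nonneg_of_lt_one_left (norm_nonneg x) hx (pow_le_one₀ (norm_nonneg q) hq.le)
  exact sub_ne_zero.mpr fun h ↦ hlt.ne (h ▸ norm_one)

lemma qPoch_ne_zero (hx : ‖x‖ < 1) (hq : ‖q‖ < 1) (n : ℕ) : qPoch x q n ≠ 0 :=
  prod_ne_zero_iff.mpr fun j _ ↦ one_sub_mul_pow_ne_zero hx hq j

lemma summable_norm_neg_mul_pow (x : ℂ) (hq : ‖q‖ < 1) :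
    Summable fun j : ℕ ↦ ‖-(x * q ^ j)‖ := by
  simp only [norm_neg, norm_mul, norm_pow]
  exact (summable_geometric_of_lt_one (norm_nonneg q) hq).mul_left _

lemma tendsto_qPoch (x : ℂ) (hq : ‖q‖ < 1) :
    Tendsto (qPoch x q) atTop (𝓝 (qPochInf x q)) := by
  change Tendsto (fun n ↦ ∏ j ∈ range n, (1 - x * q ^ j)) atTop (𝓝 (∏' j : ℕ, (1 - x * q ^ j)))
  simpa only [← sub_eq_add_neg] using
    (multipliable_one_add_of_summable (summable_norm_neg_mul_pow x hq)).hasProd.tendsto_prod_nat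

lemma qPochInf_ne_zero (hx : ‖x‖ < 1) (hq : ‖q‖ < 1) : qPochInf x q ≠ 0 := by
  simpa only [qPochInf, ← sub_eq_add_neg] using tprod_one_add_ne_zero_of_summable
    (fun j ↦ by simpa only [← sub_eq_add_neg] using one_sub_mul_pow_ne_zero hx hq j)
    (summable_norm_neg_mul_pow x hq)

lemma exists_norm_qPoch_le (x : ℂ) (hq : ‖q‖ < 1) : ∃ C, ∀ n, ‖qPoch x q n‖ ≤ C := by
  obtain ⟨C, hC⟩ := (tendsto_qPoch x hq).norm.bddAbove_range
  exact ⟨C, fun n ↦ hC ⟨n, rfl⟩⟩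

lemma exists_norm_inv_qPoch_le (hx : ‖x‖ < 1) (hq : ‖q‖ < 1) :
    ∃ C, ∀ n, ‖(qPoch x q n)⁻¹‖ ≤ C := by
  obtain ⟨C, hC⟩ := ((tendsto_qPoch x hq).inv₀ (qPochInf_ne_zero hx hq)).norm.bddAbove_range
  exact ⟨C, fun n ↦ hC ⟨n, rfl⟩⟩

lemma qPochInf_eq_one_sub_mul (x : ℂ) (hq : ‖q‖ < 1) :
    qPochInf x q = (1 - x) * qPochInf (x * q) q :=
  tendsto_nhds_unique ((tendsto_qPoch x hq).comp (tendsto_add_atTop_nat 1))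
    (((tendsto_qPoch (x * q) hq).const_mul (1 - x)).congr fun n ↦ (qPoch_succ_left x q n).symm)

end Limits

/-- **Tannery's theorem** for sums over a growing family of finite sets. -/
lemma tendsto_sum_of_dominated {ι E : Type*} [NormedAddCommGroup E] [CompleteSpace E]
    {S : ℕ → Finset ι} (hS : ∀ x, ∀ᶠ n in atTop, x ∈ S n) {f : ℕ → ι → E} {g : ι → E}
    {bound : ι → ℝ} (hbound : Summable bound)
    (hlim : ∀ x, Tendsto (f · x) atTop (𝓝 (g x))) (hle : ∀ n x, ‖f n x‖ ≤ bound x) :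
    Tendsto (fun n ↦ ∑ x ∈ S n, f n x) atTop (𝓝 (∑' x, g x)) := by
  refine Tendsto.congr (fun n ↦ (sum_eq_tsum_indicator (f n) (S n)).symm) ?_
  refine tendsto_tsum_of_dominated_convergence hbound (fun x ↦ ?_) (.of_forall fun n x ↦ ?_)
  · refine (hlim x).congr' ?_
    filter_upwards [hS x] with n hn
    rw [Set.indicator_of_mem (mem_coe.mpr hn)]
  · exact (norm_indicator_le_norm_self (f n) x).trans (hle n x)

theorem IsBaileyPair.tendsto {q : ℂ} (hq : ‖q‖ < 1) {s : ℕ} {α β : ℕ → ℂ} (hα : Summable α)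
    (h : IsBaileyPair q s α β) :
    Tendsto β atTop (𝓝 ((∑' r, α r) / (qPochInf q q * qPochInf q q))) := by
  obtain ⟨C, hC⟩ := exists_norm_inv_qPoch_le hq hq
  have hlim := tendsto_qPoch q hq
  have hne := qPochInf_ne_zero hq hq
  rw [← tsum_div_const, funext h]
  refine tendsto_sum_of_dominated (fun r ↦ ?_) (hα.norm.mul_right (C * C)) (fun r ↦ ?_)
    fun n r ↦ ?_
  · filter_upwards [eventually_ge_atTop r] with n hn using mem_range_succ_iff.mpr hn
  · refine tendsto_const_nhds.div (.mul ?_ ?_) (mul_ne_zero hne hne)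
    · exact hlim.comp (tendsto_sub_atTop_nat r)
    · exact (hlim.comp (tendsto_add_atTop_nat (r + s))).congr fun n ↦ by
        rw [Function.comp_apply, add_assoc]
  · rw [div_eq_mul_inv, mul_inv, norm_mul, norm_mul]
    gcongr
    · exact (norm_nonneg _).trans (hC 0)
    · exact hC _
    · exact hC _

lemma summable_thetaTerm {p : ℂ} (hp : ‖p‖ < 1) (u : ℂ) : Summable (thetaTerm p u) := by
  have hratio : Tendsto (fun r ↦ ‖-(u * p ^ r)‖) atTop (𝓝 0) := by
    simpa only [mul_zero, neg_zero, norm_zero]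
      using ((tendsto_pow_atTop_nhds_zero_of_norm_lt_one hp).const_mul u).neg.norm
  refine summable_of_ratio_norm_eventually_le one_half_lt_one ?_
  filter_upwards [hratio.eventually_le_const one_half_pos] with r hr
  rw [thetaTerm_succ, norm_mul, mul_comm]
  gcongr

lemma summable_thetaFold {p : ℂ} (hp : ‖p‖ < 1) (u v : ℂ) : Summable (thetaFold p u v) :=
  (summable_nat_add_iff 1).mp <|
    ((summable_nat_add_iff 1).mpr (summable_thetaTerm hp u)).add
      ((summable_nat_add_iff 1).mpr (summable_thetaTerm hp v))

section TripleProduct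

variable {u v : ℂ} (h0 : u * v ≠ 0) (h1 : ‖u * v‖ < 1)
include h0 h1

/-- The **Jacobi triple product identity**. -/
theorem hasSum_thetaFold :
    HasSum (thetaFold (u * v) u v)
      (qPochInf (u * v) (u * v) * qPochInf u (u * v) * qPochInf v (u * v)) := by
  have hne := qPochInf_ne_zero h1 h1
  have hsum := summable_thetaFold h1 u v
  have finite_form := (isBaileyPair_thetaFold h0 (qPoch_ne_zero h1 h1)).tendsto h1 hsum
  have product := ((tendsto_qPoch u h1).mul (tendsto_qPoch v h1)).div
    ((tendsto_qPoch (u * v) h1).comp (tendsto_id.const_mul_atTop' two_pos)) hne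
  have h := tendsto_nhds_unique finite_form product
  field_simp at h
  rw [hsum.hasSum_iff, h, mul_assoc]

theorem hasSum_thetaTerm_mul_one_sub :
    HasSum (fun r ↦ thetaTerm (u * v) u r * (1 - v ^ (2 * r + 1)))
      (qPochInf (u * v) (u * v) * qPochInf u (u * v) * qPochInf v (u * v)) := by
  have hu := summable_thetaTerm h1 u
  have hu_succ := (hasSum_nat_add_iff' 1).mpr hu.hasSum
  have hfold := (hasSum_nat_add_iff' 1).mpr (hasSum_thetaFold h0 h1)
  have h := hu.hasSum.sub (hu_succ.sub hfold)
  simp only [thetaFold_succ, sum_range_one, thetaTerm_zero, thetaFold_zero,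
    sub_sub_sub_cancel_right, sub_sub_cancel, ← one_sub_mul] at h
  simpa only [mul_comm (thetaTerm _ _ _)] using h

end TripleProduct

lemma qPoch_two_mul (x q : ℂ) (n : ℕ) :
    qPoch x q (2 * n) = qPoch x (q ^ 2) n * qPoch (x * q) (q ^ 2) n := by
  induction n with
  | zero => simp [qPoch_zero]
  | succ n ih =>
    rw [Nat.mul_succ, qPoch_succ, qPoch_succ, qPoch_succ, qPoch_succ, ih]
    ring

lemma qPoch_mul_qPoch_neg (q : ℂ) (n : ℕ) :
    qPoch q q n * qPoch (-q) q n = qPoch (q ^ 2) (q ^ 2) n := by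
  rw [qPoch, qPoch, qPoch, ← prod_mul_distrib]
  exact prod_congr rfl fun j _ ↦ by ring

lemma norm_pow_lt_one {R : Type*} [NormedDivisionRing R] {q : R} (hq : ‖q‖ < 1) {n : ℕ}
    (hn : n ≠ 0) : ‖q ^ n‖ < 1 := by
  rw [norm_pow]
  exact pow_lt_one₀ (norm_nonneg q) hq hn

theorem qPochInf_neg_mul_qPochInf_neg_sq {q : ℂ} (hq : ‖q‖ < 1) :
    qPochInf (-q) (q ^ 2) * qPochInf (-q ^ 2) (q ^ 2) =
      qPochInf (q ^ 2) (q ^ 2) / qPochInf q q := by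
  have hQ := norm_pow_lt_one hq two_ne_zero
  have square : qPochInf q q * qPochInf (-q) q = qPochInf (q ^ 2) (q ^ 2) :=
    tendsto_nhds_unique ((tendsto_qPoch q hq).mul (tendsto_qPoch (-q) hq))
      ((tendsto_qPoch (q ^ 2) hQ).congr fun n ↦ (qPoch_mul_qPoch_neg q n).symm)
  have bisect : qPochInf (-q) q = qPochInf (-q) (q ^ 2) * qPochInf (-q ^ 2) (q ^ 2) :=
    tendsto_nhds_unique ((tendsto_qPoch (-q) hq).comp (tendsto_id.const_mul_atTop' two_pos))
      (((tendsto_qPoch (-q) hQ).mul (tendsto_qPoch (-q ^ 2) hQ)).congr fun n ↦ by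
        simp [qPoch_two_mul, pow_two])
  rw [← bisect, ← square, mul_div_cancel_left₀ _ (qPochInf_ne_zero hq hq)]

section Tuples

variable {k : ℕ}

/-- A finite tuple `(s 0, …, s (k - 1))` continued by zeros, as in the convention `s_{k+1} = 0`. -/
def extendZero (s : Fin k → ℕ) (m : ℕ) : ℕ := if h : m < k then s ⟨m, h⟩ else 0

lemma extendZero_cons_zero (a : ℕ) (s : Fin k → ℕ) :
    extendZero (Fin.cons a s : Fin (k + 1) → ℕ) 0 = a := by
  simp [extendZero]

lemma extendZero_cons_succ (a : ℕ) (s : Fin k → ℕ) (m : ℕ) :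
    extendZero (Fin.cons a s : Fin (k + 1) → ℕ) (m + 1) = extendZero s m := by
  simp only [extendZero, Nat.succ_lt_succ_iff]
  rfl

lemma antitone_extendZero {s : Fin k → ℕ} (hs : Antitone s) : Antitone (extendZero s) := by
  intro m n hmn
  unfold extendZero
  split_ifs with hn hm
  · exact hs (Fin.mk_le_mk.mpr hmn)
  · exact absurd (hmn.trans_lt hn) hm
  · exact Nat.zero_le _
  · exact le_rfl

lemma antitone_cons_iff {a : ℕ} {s : Fin k → ℕ} :
    Antitone (Fin.cons a s : Fin (k + 1) → ℕ) ↔ Antitone s ∧ ∀ m, s m ≤ a := by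
  simp [Antitone, Fin.forall_fin_succ, and_comm]

/-- The tuples `N ≥ s 0 ≥ ⋯ ≥ s (k - 1)`, the index set of the truncated multisum. -/
def antitoneTuples (k N : ℕ) : Finset (Fin k → ℕ) :=
  {s ∈ Fintype.piFinset fun _ ↦ range (N + 1) | Antitone s}

lemma mem_antitoneTuples {N : ℕ} {s : Fin k → ℕ} :
    s ∈ antitoneTuples k N ↔ Antitone s ∧ ∀ m, s m ≤ N := by
  simp [antitoneTuples, and_comm]

lemma antitoneTuples_zero (N : ℕ) : antitoneTuples 0 N = {Fin.elim0} := by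
  ext s
  simp [mem_antitoneTuples, Subsingleton.elim s Fin.elim0, Subsingleton.antitone]

lemma sum_antitoneTuples_succ {M : Type*} [AddCommMonoid M] (k N : ℕ)
    (F : (Fin (k + 1) → ℕ) → M) :
    ∑ s ∈ antitoneTuples (k + 1) N, F s =
      ∑ b ∈ range (N + 1), ∑ s ∈ antitoneTuples k b, F (Fin.cons b s) := by
  rw [sum_sigma']
  refine sum_bij' (fun s _ ↦ ⟨s 0, Fin.tail s⟩) (fun x _ ↦ Fin.cons x.1 x.2) (fun s hs ↦ ?_)
    (fun x hx ↦ ?_) (fun s _ ↦ Fin.cons_self_tail s) (fun x _ ↦ ?_)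
    (fun s _ ↦ by rw [Fin.cons_self_tail])
  · rw [mem_antitoneTuples, ← Fin.cons_self_tail s, antitone_cons_iff] at hs
    simpa [mem_antitoneTuples, Nat.lt_succ_iff] using ⟨hs.2 0, hs.1⟩
  · simp only [mem_sigma, mem_range_succ_iff, mem_antitoneTuples] at hx
    rw [mem_antitoneTuples, antitone_cons_iff, Fin.forall_fin_succ]
    simpa using ⟨hx.2, hx.1, fun m ↦ (hx.2.2 m).trans hx.1⟩
  · simp

/-- The denominator of the multisum,
`(q;q)_{s 0 - s 1} ⋯ (q;q)_{s (k - 2) - s (k - 1)} (q;q)_{s (k - 1)}`. -/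
noncomputable def gapProd (q : ℂ) (s : Fin k → ℕ) : ℂ :=
  ∏ m ∈ range k, qPoch q q (extendZero s m - extendZero s (m + 1))

lemma gapProd_cons (q : ℂ) (a : ℕ) (s : Fin k → ℕ) :
    gapProd q (Fin.cons a s : Fin (k + 1) → ℕ) = qPoch q q (a - extendZero s 0) * gapProd q s := by
  simp only [gapProd, prod_range_succ', extendZero_cons_zero, extendZero_cons_succ, mul_comm]

/-- The exponent `∑ (s m) ^ 2 + ∑ s m` of the Andrews-Gordon multisum, the second sum running over
the last `J` entries only. -/
def gordonExponent (J : ℕ) (s : Fin k → ℕ) : ℕ :=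
  ∑ m ∈ range k, (extendZero s m ^ 2 + if k ≤ m + J then extendZero s m else 0)

lemma gordonExponent_cons (J b : ℕ) (s : Fin k → ℕ) :
    gordonExponent J (Fin.cons b s : Fin (k + 1) → ℕ) =
      (b ^ 2 + if k < J then b else 0) + gordonExponent J s := by
  have shift (m : ℕ) : k + 1 ≤ m + 1 + J ↔ k ≤ m + J := by omega
  rw [gordonExponent, sum_range_succ', add_comm]
  simp only [extendZero_cons_zero, extendZero_cons_succ, shift, zero_add, Nat.succ_le_iff]
  rfl

lemma sum_antitoneTuples_eq_innerSum (q : ℂ) (J k N : ℕ) :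
    ∑ s ∈ antitoneTuples k N, q ^ gordonExponent J s / gapProd q (Fin.cons N s : Fin (k + 1) → ℕ) =
      innerSum q J k N := by
  induction k generalizing N with
  | zero => simp [antitoneTuples_zero, gordonExponent, gapProd, extendZero, innerSum]
  | succ k ih =>
    rw [sum_antitoneTuples_succ, innerSum]
    refine sum_congr rfl fun b _ ↦ ?_
    rw [← ih, mul_sum]
    refine sum_congr rfl fun s _ ↦ ?_
    rw [gordonExponent_cons, gapProd_cons, extendZero_cons_zero, pow_add, mul_div_mul_comm]

/-- The general term of the multisum, `s m` standing for `s_{m + 1}`. -/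
noncomputable def summand (q : ℂ) (i : ℕ) (s : Fin k → ℕ) : ℂ :=
  qPoch (-q) q (2 * extendZero s 1) *
    q ^ (extendZero s 0 ^ 2 + 2 * ∑ m ∈ Ico 2 k, extendZero s m ^ 2 +
      (extendZero s 0 - extendZero s 1) + 2 * ∑ m ∈ Ico i k, extendZero s m) /
    gapProd (q ^ 2) s

lemma summand_cons_cons (q : ℂ) {i : ℕ} (hi : 1 ≤ i) (hik : i ≤ k + 2) (a b : ℕ) (s : Fin k → ℕ) :
    summand q i (Fin.cons a (Fin.cons b s : Fin (k + 1) → ℕ) : Fin (k + 2) → ℕ) =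
      q ^ (a ^ 2 + (a - b)) / qPoch (q ^ 2) (q ^ 2) (a - b) *
        (qPoch (-q) q (2 * b) * (q ^ 2) ^ ((if i = 1 then 1 else 0) * b)) *
        ((q ^ 2) ^ gordonExponent (k + 2 - i) s /
          gapProd (q ^ 2) (Fin.cons b s : Fin (k + 1) → ℕ)) := by
  set t := extendZero (Fin.cons a (Fin.cons b s : Fin (k + 1) → ℕ) : Fin (k + 2) → ℕ) with ht
  have t0 : t 0 = a := extendZero_cons_zero _ _
  have t1 : t 1 = b := by rw [ht, extendZero_cons_succ, extendZero_cons_zero]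
  have t2 (m : ℕ) : t (m + 2) = extendZero s m := by
    rw [ht, extendZero_cons_succ, extendZero_cons_succ]
  have squares : ∑ m ∈ Ico 2 (k + 2), t m ^ 2 = ∑ m ∈ range k, extendZero s m ^ 2 := by
    rw [sum_Ico_eq_sum_range, Nat.add_sub_cancel]
    simp only [add_comm 2, t2]
  have linear : ∑ m ∈ Ico i (k + 2), t m = (if i = 1 then 1 else 0) * b +
      ∑ m ∈ range k, if k ≤ m + (k + 2 - i) then extendZero s m else 0 := by
    have hIco : Ico i (k + 2) = {m ∈ range (k + 2) | i ≤ m} := by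
      ext m
      simp [and_comm]
    have hif : (if i ≤ 1 then b else 0) = (if i = 1 then 1 else 0) * b := by
      rw [ite_mul, one_mul, zero_mul, if_congr (le_antisymm_iff.trans (and_iff_left hi)) rfl rfl]
    rw [hIco, sum_filter, sum_range_succ', sum_range_succ', if_neg (Nat.not_le.mpr hi), add_zero,
      add_comm, zero_add, t1, hif]
    congr 1
    exact sum_congr rfl fun m _ ↦ by rw [add_assoc, t2]; exact if_congr (by omega) rfl rfl
  rw [summand, ← ht, t0, t1, gapProd_cons, extendZero_cons_zero, squares, linear, gordonExponent,
    sum_add_distrib]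
  ring

end Tuples

section Summability

variable {k : ℕ}

lemma summable_prod_apply {f : ℕ → ℝ} (hf0 : 0 ≤ f) (hf : Summable f) (k : ℕ) :
    Summable fun s : Fin k → ℕ ↦ ∏ m, f (s m) := by
  induction k with
  | zero => exact Summable.of_finite
  | succ k ih =>
    rw [← (Fin.consEquiv fun _ ↦ ℕ).summable_iff]
    refine (hf.mul_of_nonneg ih hf0 fun s ↦ prod_nonneg fun m _ ↦ hf0 (s m)).congr fun x ↦ ?_
    simp [Fin.consEquiv, Fin.prod_univ_succ]

lemma sum_le_two_mul_sum_sq (hk : 2 ≤ k) {s : Fin k → ℕ} (hs : Antitone s) :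
    ∑ m, s m ≤ 2 * (extendZero s 0 ^ 2 + 2 * ∑ m ∈ Ico 2 k, extendZero s m ^ 2) := by
  have hsum : ∑ m, s m = ∑ m ∈ range k, extendZero s m := by
    rw [sum_range]
    exact sum_congr rfl fun m _ ↦ by simp [extendZero]
  have hfirst : extendZero s 1 ≤ extendZero s 0 := antitone_extendZero hs zero_le_one
  have hsq : extendZero s 0 ≤ extendZero s 0 ^ 2 := Nat.le_self_pow two_ne_zero _
  have htail : ∑ m ∈ Ico 2 k, extendZero s m ≤ ∑ m ∈ Ico 2 k, extendZero s m ^ 2 :=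
    sum_le_sum fun m _ ↦ Nat.le_self_pow two_ne_zero _
  rw [hsum, ← sum_range_add_sum_Ico _ hk, sum_range_succ, sum_range_one]
  omega

variable {q : ℂ} (hq : ‖q‖ < 1)
include hq

lemma exists_norm_inv_gapProd_le (k : ℕ) :
    ∃ C, ∀ s : Fin k → ℕ, ‖(gapProd q s)⁻¹‖ ≤ C := by
  obtain ⟨C, hC⟩ := exists_norm_inv_qPoch_le hq hq
  refine ⟨C ^ k, fun s ↦ ?_⟩
  rw [gapProd, ← prod_inv_distrib, norm_prod]
  exact (prod_le_prod (fun _ _ ↦ norm_nonneg _) fun _ _ ↦ hC _).trans_eq (by simp)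

lemma summable_summand (hk : 2 ≤ k) (i : ℕ) :
    Summable fun s : {s : Fin k → ℕ // Antitone s} ↦ summand q i s.1 := by
  obtain ⟨B, hB⟩ := exists_norm_qPoch_le (-q) hq
  obtain ⟨C, hC⟩ := exists_norm_inv_gapProd_le (norm_pow_lt_one hq two_ne_zero) k
  set ρ := √‖q‖
  have hρ0 : 0 ≤ ρ := Real.sqrt_nonneg _
  have hρ1 : ρ < 1 := (Real.sqrt_lt' one_pos).mpr (by simpa using hq)
  have hB0 : 0 ≤ B := (norm_nonneg _).trans (hB 0)
  have hgeom : Summable fun s : {s : Fin k → ℕ // Antitone s} ↦ ∏ m, ρ ^ s.1 m :=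
    (summable_prod_apply (fun n ↦ pow_nonneg hρ0 n)
      (summable_geometric_of_lt_one hρ0 hρ1) k).subtype _
  refine Summable.of_norm_bounded ((hgeom.mul_left B).mul_right C) fun s ↦ ?_
  rw [summand, div_eq_mul_inv, norm_mul, norm_mul, norm_pow]
  gcongr
  · exact hB _
  · rw [prod_pow_eq_pow_sum, ← Real.sq_sqrt (norm_nonneg q), ← pow_mul]
    refine pow_le_pow_of_le_one hρ0 hρ1.le ((sum_le_two_mul_sum_sq hk s.2).trans ?_)
    omega
  · exact hC _

lemma tendsto_sum_summand (hk : 2 ≤ k) (i : ℕ) :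
    Tendsto (fun N ↦ ∑ s ∈ antitoneTuples k N,
        summand q i s / qPoch (q ^ 2) (q ^ 2) (N - extendZero s 0)) atTop
      (𝓝 ((∑' s : {s : Fin k → ℕ // Antitone s}, summand q i s.1) /
        qPochInf (q ^ 2) (q ^ 2))) := by
  have hQ := norm_pow_lt_one hq two_ne_zero
  obtain ⟨C, hC⟩ := exists_norm_inv_qPoch_le hQ hQ
  have hsubtype (N : ℕ) (F : (Fin k → ℕ) → ℂ) :
      ∑ s ∈ (antitoneTuples k N).subtype Antitone, F s = ∑ s ∈ antitoneTuples k N, F s :=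
    sum_subtype_of_mem F fun s hs ↦ (mem_antitoneTuples.mp hs).1
  simp only [← hsubtype]
  rw [← tsum_div_const]
  refine tendsto_sum_of_dominated (fun s ↦ ?_) ((summable_summand hq hk i).norm.mul_right C)
    (fun s ↦ ?_) fun N s ↦ ?_
  · filter_upwards [eventually_ge_atTop (univ.sup s.1)] with N hN
    exact mem_subtype.mpr (mem_antitoneTuples.mpr ⟨s.2, fun m ↦ (le_sup (mem_univ m)).trans hN⟩)
  · exact tendsto_const_nhds.div ((tendsto_qPoch _ hQ).comp (tendsto_sub_atTop_nat _))
      (qPochInf_ne_zero hQ hQ)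
  · rw [div_eq_mul_inv, norm_mul]
    gcongr
    exact hC _

end Summability

section Evaluation

variable {q : ℂ}

lemma thetaTerm_sq_neg (q : ℂ) (b m : ℕ) :
    thetaTerm (q ^ 2) (-q ^ 2 * (q ^ 2) ^ b) m = q ^ (m ^ 2 + (2 * b + 1) * m) := by
  induction m with
  | zero => simp [thetaTerm_zero]
  | succ m ih => rw [thetaTerm_succ, ih]; ring

lemma baileyWeight_sq (q : ℂ) (e n : ℕ) :
    baileyWeight (q ^ 2) ((q ^ 2) ^ (e + 1)) (-q ^ (2 * e + 1)) n =
      q ^ (n ^ 2 + 2 * e * n) * qPoch (-q) (q ^ 2) n := by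
  induction n with
  | zero => simp [baileyWeight_zero, qPoch_zero]
  | succ n ih => rw [baileyWeight_succ, qPoch_succ, ih]; ring

lemma sum_sum_q_pow_div_mul (hQ : ∀ n, qPoch (q ^ 2) (q ^ 2) n ≠ 0) (g : ℕ → ℂ) (N : ℕ) :
    ∑ a ∈ range (N + 1), ∑ b ∈ range (a + 1), q ^ (a ^ 2 + (a - b)) /
        (qPoch (q ^ 2) (q ^ 2) (a - b) * qPoch (q ^ 2) (q ^ 2) (N - a)) * g b =
      ∑ b ∈ range (N + 1), q ^ b ^ 2 * (qPoch (-q ^ 2 * (q ^ 2) ^ b) (q ^ 2) (N - b) /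
        qPoch (q ^ 2) (q ^ 2) (N - b)) * g b := by
  rw [sum_range_succ_sum_range_succ]
  refine sum_congr rfl fun b _ ↦ ?_
  rw [← q_binomial_theorem hQ, mul_sum, sum_mul]
  refine sum_congr rfl fun m _ ↦ ?_
  rw [thetaTerm_sq_neg, Nat.add_sub_cancel_left, ← Nat.sub_sub]
  ring

variable {k i e : ℕ}

lemma sum_antitoneTuples_summand (hQ : ∀ n, qPoch (q ^ 2) (q ^ 2) n ≠ 0) (hi : 1 ≤ i)
    (hik : i ≤ k + 2) (he : e = if i = 1 then 1 else 0) (N : ℕ) :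
    ∑ s ∈ antitoneTuples (k + 2) N,
        summand q i s / qPoch (q ^ 2) (q ^ 2) (N - extendZero s 0) =
      qPoch (-q ^ 2) (q ^ 2) N * ∑ b ∈ range (N + 1),
        baileyWeight (q ^ 2) ((q ^ 2) ^ (e + 1)) (-q ^ (2 * e + 1)) b /
          qPoch (q ^ 2) (q ^ 2) (N - b) * innerSum (q ^ 2) (k + 2 - i) k b := by
  have inner (a b : ℕ) : ∑ s ∈ antitoneTuples k b,
      summand q i (Fin.cons a (Fin.cons b s : Fin (k + 1) → ℕ) : Fin (k + 2) → ℕ) /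
        qPoch (q ^ 2) (q ^ 2) (N - a) =
      q ^ (a ^ 2 + (a - b)) /
        (qPoch (q ^ 2) (q ^ 2) (a - b) * qPoch (q ^ 2) (q ^ 2) (N - a)) *
        (qPoch (-q) q (2 * b) * (q ^ 2) ^ (e * b) * innerSum (q ^ 2) (k + 2 - i) k b) := by
    rw [← sum_antitoneTuples_eq_innerSum, mul_sum, mul_sum]
    refine sum_congr rfl fun s _ ↦ ?_
    rw [summand_cons_cons q hi hik, he]
    ring
  simp only [sum_antitoneTuples_succ, extendZero_cons_zero, inner]
  rw [sum_sum_q_pow_div_mul hQ, mul_sum]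
  refine sum_congr rfl fun b hb ↦ ?_
  rw [baileyWeight_sq, qPoch_two_mul, ← Nat.add_sub_cancel' (mem_range_succ_iff.mp hb), qPoch_add,
    Nat.add_sub_cancel_left, show -q * q = -q ^ 2 by ring]
  ring

theorem tsum_summand_of_isBaileyPair (hq : ‖q‖ < 1) (hi : 1 ≤ i) (hik : i ≤ k + 2)
    (he : e = if i = 1 then 1 else 0) {α α' : ℕ → ℂ} {S : ℂ}
    (h : IsBaileyPair (q ^ 2) e α (innerSum (q ^ 2) (k + 2 - i) k))
    (hα : ∀ r, baileyWeight (q ^ 2) ((q ^ 2) ^ (e + 1)) (-q ^ (2 * e + 1)) r /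
      qPoch (-q ^ (2 * e + 1)) (q ^ 2) r * α r = α' r) (hsum : HasSum α' S) :
    ∑' s : {s : Fin (k + 2) → ℕ // Antitone s}, summand q i s.1 =
      qPochInf (-q ^ 2) (q ^ 2) * qPochInf (-q ^ (2 * e + 1)) (q ^ 2) /
        qPochInf (q ^ 2) (q ^ 2) * S := by
  have hQ := norm_pow_lt_one hq two_ne_zero
  have hy : ‖-q ^ (2 * e + 1)‖ < 1 := by
    rw [norm_neg]
    exact norm_pow_lt_one hq (Nat.succ_ne_zero _)
  have hne := qPochInf_ne_zero hQ hQ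
  have hy_ne := qPoch_ne_zero hy hQ
  have limit := ((tendsto_qPoch (-q ^ 2) hQ).mul (tendsto_qPoch (-q ^ (2 * e + 1)) hQ)).mul
    ((funext hα ▸ h.bailey_lemma (qPoch_ne_zero hQ hQ) hy_ne).tendsto hQ hsum.summable)
  have key := tendsto_nhds_unique (tendsto_sum_summand hq (Nat.le_add_left 2 k) i)
    (limit.congr fun N ↦ by
      rw [sum_antitoneTuples_summand (qPoch_ne_zero hQ hQ) hi hik he, mul_assoc,
        mul_div_cancel₀ _ (hy_ne N)])
  rw [div_eq_iff hne, hsum.tsum_eq] at key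
  rw [key]
  field_simp

theorem tsum_summand_add_two (hq0 : q ≠ 0) (hq : ‖q‖ < 1) (J l : ℕ) :
    ∑' s : {s : Fin (J + l + 2) → ℕ // Antitone s}, summand q (l + 2) s.1 =
      qPochInf (q ^ (4 * (J + l + 2))) (q ^ (4 * (J + l + 2))) *
        qPochInf (q ^ (2 * l + 3)) (q ^ (4 * (J + l + 2))) *
        qPochInf (q ^ (4 * J + 2 * l + 5)) (q ^ (4 * (J + l + 2))) / qPochInf q q := by
  have hQ := norm_pow_lt_one hq two_ne_zero
  have hne := qPochInf_ne_zero hQ hQ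
  have base : q ^ (4 * J + 2 * l + 5) * q ^ (2 * l + 3) = q ^ (4 * (J + l + 2)) := by ring
  have triple := hasSum_thetaFold (base ▸ pow_ne_zero _ hq0)
    (base ▸ norm_pow_lt_one hq (by omega))
  rw [base] at triple
  have pair := isBaileyPair_innerSum_add (pow_ne_zero 2 hq0) (qPoch_ne_zero hQ hQ) J l
  have hα (r : ℕ) : baileyWeight (q ^ 2) ((q ^ 2) ^ (0 + 1)) (-q ^ (2 * 0 + 1)) r /
      qPoch (-q ^ (2 * 0 + 1)) (q ^ 2) r *
        thetaFold ((q ^ 2) ^ (2 * J + 2 * l + 3)) ((q ^ 2) ^ (2 * J + l + 2))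
          ((q ^ 2) ^ (l + 1)) r =
      thetaFold (q ^ (4 * (J + l + 2))) (q ^ (4 * J + 2 * l + 5)) (q ^ (2 * l + 3)) r := by
    have hy : qPoch (-q) (q ^ 2) r ≠ 0 := qPoch_ne_zero (by rwa [norm_neg]) hQ r
    rw [baileyWeight_sq, mul_zero, zero_mul, add_zero, zero_add, pow_one,
      mul_div_cancel_right₀ _ hy, pow_sq_mul_thetaFold]
    ring_nf
  rw [tsum_summand_of_isBaileyPair hq (by omega) (by omega) (by simp)
    (by rwa [show J + l + 2 - (l + 2) = J by omega]) hα triple, mul_zero, zero_add, pow_one,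
    mul_comm (qPochInf _ _), qPochInf_neg_mul_qPochInf_neg_sq hq]
  field_simp

lemma baileyWeight_sq_div_mul (hq : ‖q‖ < 1) (r : ℕ) :
    baileyWeight (q ^ 2) ((q ^ 2) ^ 2) (-q ^ 3) r / qPoch (-q ^ 3) (q ^ 2) r *
        (1 - (q ^ 2) ^ (2 * r + 1)) =
      (1 + q) * (q ^ r ^ 2 * (q ^ 2) ^ r * (1 - q ^ (2 * r + 1))) := by
  have hy : qPoch (-q ^ 3) (q ^ 2) r ≠ 0 :=
    qPoch_ne_zero (by rw [norm_neg]; exact norm_pow_lt_one hq three_ne_zero)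
      (norm_pow_lt_one hq two_ne_zero) r
  have shift : qPoch (-q) (q ^ 2) r * (1 + q ^ (2 * r + 1)) =
      (1 + q) * qPoch (-q ^ 3) (q ^ 2) r := by
    have h := (qPoch_succ (-q) (q ^ 2) r).symm.trans (qPoch_succ_left (-q) (q ^ 2) r)
    ring_nf at h ⊢
    exact h
  rw [baileyWeight_sq q 1, div_mul_eq_mul_div, div_eq_iff hy]
  linear_combination q ^ (r ^ 2 + 2 * r) * (1 - q ^ (2 * r + 1)) * shift

theorem tsum_summand_one (hq0 : q ≠ 0) (hq : ‖q‖ < 1) (k : ℕ) :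
    ∑' s : {s : Fin (k + 2) → ℕ // Antitone s}, summand q 1 s.1 =
      qPochInf (q ^ (4 * (k + 2))) (q ^ (4 * (k + 2))) * qPochInf q (q ^ (4 * (k + 2))) *
        qPochInf (q ^ (4 * k + 7)) (q ^ (4 * (k + 2))) / qPochInf q q := by
  have hQ := norm_pow_lt_one hq two_ne_zero
  have hne := qPochInf_ne_zero hQ hQ
  have base : q ^ (4 * k + 7) * q = q ^ (4 * (k + 2)) := by ring
  have triple := hasSum_thetaTerm_mul_one_sub (base ▸ pow_ne_zero _ hq0)
    (base ▸ norm_pow_lt_one hq (by omega))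
  rw [base] at triple
  have pair := isBaileyPair_innerSum_of_le (pow_ne_zero 2 hq0) (qPoch_ne_zero hQ hQ) k.le_succ
  have hα (r : ℕ) : baileyWeight (q ^ 2) ((q ^ 2) ^ 2) (-q ^ 3) r / qPoch (-q ^ 3) (q ^ 2) r *
        (thetaTerm ((q ^ 2) ^ (2 * k + 3)) ((q ^ 2) ^ (2 * k + 2)) r *
          (1 - (q ^ 2) ^ (2 * r + 1))) =
      (1 + q) * (thetaTerm (q ^ (4 * (k + 2))) (q ^ (4 * k + 7)) r * (1 - q ^ (2 * r + 1))) := by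
    rw [mul_left_comm, baileyWeight_sq_div_mul hq, mul_left_comm, ← mul_assoc (thetaTerm _ _ _),
      thetaTerm_mul_pow]
    ring_nf
  have head : qPochInf (-q) (q ^ 2) = (1 + q) * qPochInf (-q ^ 3) (q ^ 2) := by
    rw [qPochInf_eq_one_sub_mul (-q) hQ]
    ring_nf
  calc ∑' s : {s : Fin (k + 2) → ℕ // Antitone s}, summand q 1 s.1
      = qPochInf (-q) (q ^ 2) * qPochInf (-q ^ 2) (q ^ 2) / qPochInf (q ^ 2) (q ^ 2) *
          (qPochInf (q ^ (4 * (k + 2))) (q ^ (4 * (k + 2))) *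
            qPochInf (q ^ (4 * k + 7)) (q ^ (4 * (k + 2))) *
            qPochInf q (q ^ (4 * (k + 2)))) := by
        rw [tsum_summand_of_isBaileyPair hq le_rfl (by omega) (by simp) pair hα
          (triple.mul_left _), head]
        ring
    _ = _ := by
        rw [qPochInf_neg_mul_qPochInf_neg_sq hq]
        field_simp

end Evaluation

end

/-- A modulus `4k` identity.  The tuple `s` encodes `s_1 ≥ s_2 ≥ ⋯ ≥ s_k ≥ 0` via
`s_m = t (m-1)`, with the convention `s_{k+1} = 0`. -/
theorem modulus_4k_identity (q : ℂ) (h0 : 0 < ‖q‖) (h1 : ‖q‖ < 1)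
    (k i : ℕ) (hk : 2 ≤ k) (hi1 : 1 ≤ i) (hik : i ≤ k) :
    (∑' s : {s : Fin k → ℕ // Antitone s},
      (let t : ℕ → ℕ := fun m => if h : m < k then s.1 ⟨m, h⟩ else 0
       qPoch (-q) q (2 * t 1) *
         q ^ ((t 0) ^ 2 + 2 * ∑ m ∈ Finset.Ico 2 k, (t m) ^ 2 + (t 0 - t 1) +
              2 * ∑ m ∈ Finset.Ico i k, t m) /
         ∏ m ∈ Finset.range k, qPoch (q ^ 2) (q ^ 2) (t m - t (m + 1)))) =
      qPochInf (q ^ (4 * k)) (q ^ (4 * k)) * qPochInf (q ^ (2 * i - 1)) (q ^ (4 * k)) *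
        qPochInf (q ^ (4 * k - 2 * i + 1)) (q ^ (4 * k)) / qPochInf q q := by
  have hq0 : q ≠ 0 := norm_pos_iff.mp h0
  change ∑' s : {s : Fin k → ℕ // Antitone s}, summand q i s.1 = _
  obtain rfl | hi2 := hi1.eq_or_lt
  · obtain ⟨κ, rfl⟩ := Nat.exists_eq_add_of_le' hk
    rw [tsum_summand_one hq0 h1, pow_one, show 4 * (κ + 2) - 2 * 1 + 1 = 4 * κ + 7 by omega]
  · obtain ⟨l, rfl⟩ := Nat.exists_eq_add_of_le' hi2
    obtain ⟨J, rfl⟩ := Nat.exists_eq_add_of_le' hik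
    rw [show 2 * (l + 2) - 1 = 2 * l + 3 by omega,
      show 4 * (J + (l + 2)) - 2 * (l + 2) + 1 = 4 * J + 2 * l + 5 by omega]
    exact tsum_summand_add_two hq0 h1 J l
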